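/- Let x₁ = (r,0,0), x₂ = (0,r,0), x₃ = (0,0,r) in ℝ³ with r > 0, and let c(x₁,x₂,x₃) = -det[x₁ x₂ x₃]. Then the 9×9 matrix Ḡ of mixed second partials ∂²c/∂x_i^α ∂x_j^β (i ≠ j, zero diagonal blocks), evaluated at (x₁,x₂,x₃), has exactly 5 positive eigenvalues and 4 negative eigenvalues (signature (5,4,0)). -/

import Mathlib

open Matrix

/-- The determinant cost: `c(x₁,x₂,x₃) = -det [x₁ x₂ x₃]`, where `x_i ∈ ℝ³`
are the columns. -/
noncomputable def detCost : (Fin 3 → Fin 3 → ℝ) → ℝ :=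
  fun x => -Matrix.det (Matrix.of fun α i => x i α)

/-- The `9 × 9` matrix of mixed second partials of `detCost` (zero diagonal
blocks), evaluated at the point `x`. -/
noncomputable def detCostG (x : Fin 3 → Fin 3 → ℝ) :
    Matrix (Fin 3 × Fin 3) (Fin 3 × Fin 3) ℝ :=
  fun p q => if p.1 = q.1 then 0 else
    iteratedFDeriv ℝ 2 detCost x
      ![Pi.single p.1 (Pi.single p.2 1), Pi.single q.1 (Pi.single q.2 1)]

/-!
The determinant is multilinear in its columns, so its mixed second partials at `r • 1` are
determinants of `r • 1` with two columns replaced by basis vectors. Hence, identifying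
`ℝⁿ × ⋯ × ℝⁿ` with the `n × n` matrices, the matrix of mixed second partials of `-det` at `r • 1`
is `r ^ (n - 2)` times that of the quadratic form `A ↦ tr (A * A) - (tr A) ^ 2`. The latter acts as
`1` on traceless symmetric matrices, as `-1` on antisymmetric matrices and as `1 - n` on scalar
matrices; for `n = 3` these spaces have dimensions `5`, `3` and `1`.
-/

open Polynomial Function

section FunctionalCalculus

variable {R A κ : Type*} [Fintype κ]

theorem aeval_sum_smul_completeOrthogonalIdempotents [CommSemiring R] [Semiring A] [Algebra R A]
    {e : κ → A} (he : CompleteOrthogonalIdempotents e) (c : κ → R) (p : R[X]) :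
    aeval (∑ k, c k • e k) p = ∑ k, p.eval (c k) • e k := by
  classical
  have mul_sum (k : κ) (d : κ → R) : e k * ∑ l, d l • e l = d k • e k := by
    simp [Finset.mul_sum, he.mul_eq]
  induction p using Polynomial.induction_on' with
  | add p q hp hq => simp [hp, hq, add_smul, Finset.sum_add_distrib]
  | monomial m a =>
    have pow_eq : (∑ k, c k • e k) ^ m = ∑ k, c k ^ m • e k := by
      induction m with
      | zero => simp [he.complete]
      | succ m ih => simp [pow_succ, ih, Finset.sum_mul, mul_sum, smul_smul]
    simp [aeval_monomial, pow_eq, Finset.mul_sum, ← Algebra.smul_def, smul_smul, mul_comm]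

theorem completeOrthogonalIdempotents_of_involution [Field R] [NeZero (2 : R)] [Ring A]
    [Algebra R A] {s p : A} (hs : s * s = 1) (hp : p * p = p) (hsp : s * p = p)
    (hps : p * s = p) :
    CompleteOrthogonalIdempotents
      ![(2⁻¹ : R) • (1 + s) - p, (2⁻¹ : R) • (1 - s), p] := by
  have two_inv_smul (x : A) : (2⁻¹ : R) • (x + x) = x := by
    rw [← two_smul R x, inv_smul_smul₀ two_ne_zero]
  have sym_mul_skew : (1 + s) * (1 - s) = 0 := by simp [mul_sub, add_mul, hs, add_comm]
  have skew_mul_sym : (1 - s) * (1 + s) = 0 := by simp [mul_add, sub_mul, hs]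
  have sym_mul : (1 + s) * p = p + p := by rw [add_mul, one_mul, hsp]
  have mul_sym : p * (1 + s) = p + p := by rw [mul_add, mul_one, hps]
  have skew_mul : (1 - s) * p = 0 := by rw [sub_mul, one_mul, hsp, sub_self]
  have mul_skew : p * (1 - s) = 0 := by rw [mul_sub, mul_one, hps, sub_self]
  refine CompleteOrthogonalIdempotents.iff_ortho_complete.mpr ⟨fun k l hkl => ?_, ?_⟩
  · fin_cases k <;> fin_cases l <;> first
      | exact absurd rfl hkl
      | simp [-smul_add, sub_mul (_ • _), mul_sub _ (_ • _), sym_mul_skew, skew_mul_sym, sym_mul,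
          mul_sym, skew_mul, mul_skew, two_inv_smul, hp]
  · rw [Fin.sum_univ_three]
    calc (2⁻¹ : R) • (1 + s) - p + (2⁻¹ : R) • (1 - s) + p
        = (2⁻¹ : R) • ((1 : A) + 1) := by module
      _ = 1 := two_inv_smul 1

end FunctionalCalculus

section Spectrum

variable {𝕜 m κ : Type*} [RCLike 𝕜] [Fintype m] [DecidableEq m] {A : Matrix m m 𝕜}

theorem trace_aeval_eq_sum_eigenvalues (hA : A.IsHermitian) (p : ℝ[X]) :
    (aeval A p).trace = ∑ i, ((p.eval (hA.eigenvalues i) : ℝ) : 𝕜) := by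
  rw [← cfc_polynomial p A hA.isSelfAdjoint, hA.cfc_eq, IsHermitian.cfc,
    Unitary.conjStarAlgAut_apply, trace_mul_comm, ← mul_assoc]
  simp

theorem card_filter_eigenvalues_eq_sum_trace [Fintype κ] (hA : A.IsHermitian)
    {e : κ → Matrix m m 𝕜} (he : CompleteOrthogonalIdempotents e) {c : κ → ℝ}
    (hAe : A = ∑ k, c k • e k) (P : ℝ → Prop) [DecidablePred P] :
    ((Finset.univ.filter fun i => P (hA.eigenvalues i)).card : 𝕜) =
      ∑ k with P (c k), (e k).trace := by
  classical
  -- For `p` interpolating the indicator of `P`, both sides are the trace of `p(A)`.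
  let s : Finset ℝ := Finset.univ.image hA.eigenvalues ∪ Finset.univ.image c
  obtain ⟨p, hp⟩ : ∃ p : ℝ[X], ∀ x ∈ s, p.eval x = if P x then 1 else 0 :=
    ⟨Lagrange.interpolate s id fun x => if P x then 1 else 0, fun x hx =>
      Lagrange.eval_interpolate_at_node _ Function.injective_id.injOn hx⟩
  have eval_eigenvalue (i : m) :
      p.eval (hA.eigenvalues i) = if P (hA.eigenvalues i) then 1 else 0 :=
    hp _ (by simp [s])
  have eval_coeff (k : κ) : p.eval (c k) = if P (c k) then 1 else 0 :=
    hp _ (by simp [s])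
  calc ((Finset.univ.filter fun i => P (hA.eigenvalues i)).card : 𝕜)
      = ∑ i, ((p.eval (hA.eigenvalues i) : ℝ) : 𝕜) := by
        simp [eval_eigenvalue, apply_ite (RCLike.ofReal (K := 𝕜))]
    _ = (aeval A p).trace := (trace_aeval_eq_sum_eigenvalues hA p).symm
    _ = ∑ k, p.eval (c k) • (e k).trace := by
        rw [hAe, aeval_sum_smul_completeOrthogonalIdempotents he, trace_sum]
        simp only [trace_smul]
    _ = ∑ k with P (c k), (e k).trace := by
        simp [eval_coeff, Finset.sum_filter]

end Spectrum

section MatrixSpace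

variable (n R K : Type*) [DecidableEq n] [CommRing R] [Field K]

/-- The commutation matrix, sending the vectorization of `A` to that of `Aᵀ`. As a bilinear form
it is `(A, B) ↦ tr (A * B)`. -/
def commutationMatrix : Matrix (n × n) (n × n) R :=
  Equiv.Perm.permMatrix R (Equiv.prodComm n n)

/-- The matrix of the bilinear form `(A, B) ↦ tr A * tr B` on vectorized matrices. -/
def traceMulTraceMatrix : Matrix (n × n) (n × n) R :=
  vecMulVec (vec 1) (vec 1)

/-- The orthogonal projections of the space of vectorized matrices onto its traceless symmetric,
antisymmetric and scalar parts, in this order. -/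
def symmetryProj [Fintype n] : Fin 3 → Matrix (n × n) (n × n) K :=
  ![(2⁻¹ : K) • (1 + commutationMatrix n K) - (Fintype.card n : K)⁻¹ • traceMulTraceMatrix n K,
    (2⁻¹ : K) • (1 - commutationMatrix n K),
    (Fintype.card n : K)⁻¹ • traceMulTraceMatrix n K]

variable {n R K}

theorem commutationMatrix_apply (p q : n × n) :
    commutationMatrix n R p q = if p.2 = q.1 ∧ p.1 = q.2 then 1 else 0 := by
  simp [commutationMatrix, Equiv.Perm.permMatrix, PEquiv.toMatrix_apply, Prod.ext_iff]

theorem traceMulTraceMatrix_apply (p q : n × n) :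
    traceMulTraceMatrix n R p q = if p.1 = p.2 ∧ q.1 = q.2 then 1 else 0 := by
  simp [traceMulTraceMatrix, vecMulVec_apply, Matrix.one_apply, eq_comm, ← ite_and, and_comm]

theorem vec_one_comp_swap : vec (1 : Matrix n n R) ∘ Prod.swap = vec 1 := by
  rw [← vec_transpose, transpose_one]

variable [Fintype n]

theorem commutationMatrix_mul_self : commutationMatrix n R * commutationMatrix n R = 1 := by
  rw [commutationMatrix, ← permMatrix_mul]
  exact permMatrix_one

theorem commutationMatrix_mul_traceMulTraceMatrix :
    commutationMatrix n R * traceMulTraceMatrix n R = traceMulTraceMatrix n R := by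
  rw [commutationMatrix, traceMulTraceMatrix, mul_vecMulVec, permMatrix_mulVec]
  congr 1
  exact vec_one_comp_swap

theorem traceMulTraceMatrix_mul_commutationMatrix :
    traceMulTraceMatrix n R * commutationMatrix n R = traceMulTraceMatrix n R := by
  rw [commutationMatrix, traceMulTraceMatrix, vecMulVec_mul, vecMul_permMatrix]
  congr 1
  exact vec_one_comp_swap

theorem vec_one_dotProduct_vec_one : vec (1 : Matrix n n R) ⬝ᵥ vec 1 = Fintype.card n := by
  simp [vec_dotProduct_vec, -vec]

theorem traceMulTraceMatrix_mul_self :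
    traceMulTraceMatrix n R * traceMulTraceMatrix n R =
      (Fintype.card n : R) • traceMulTraceMatrix n R := by
  rw [traceMulTraceMatrix, vecMulVec_mul_vecMulVec, vec_one_dotProduct_vec_one, vecMulVec_smul]

theorem trace_commutationMatrix : (commutationMatrix n R).trace = Fintype.card n := by
  simp [Matrix.trace, commutationMatrix_apply, Fintype.sum_prod_type, eq_comm, -Finset.sum_boole]

theorem trace_traceMulTraceMatrix : (traceMulTraceMatrix n R).trace = Fintype.card n := by
  rw [traceMulTraceMatrix, trace_vecMulVec, vec_one_dotProduct_vec_one]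

theorem completeOrthogonalIdempotents_symmetryProj [NeZero (2 : K)] :
    CompleteOrthogonalIdempotents (symmetryProj n K) := by
  refine completeOrthogonalIdempotents_of_involution commutationMatrix_mul_self ?_ ?_ ?_
  · rw [smul_mul_smul_comm, traceMulTraceMatrix_mul_self, smul_smul]
    congr 1
    grind
  · rw [mul_smul_comm, commutationMatrix_mul_traceMulTraceMatrix]
  · rw [smul_mul_assoc, traceMulTraceMatrix_mul_commutationMatrix]

theorem commutationMatrix_sub_traceMulTraceMatrix_eq_sum [CharZero K] [Nonempty n] :
    commutationMatrix n K - traceMulTraceMatrix n K =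
      ∑ k, ![1, -1, 1 - (Fintype.card n : K)] k • symmetryProj n K k := by
  have card_ne_zero : (Fintype.card n : K) ≠ 0 := Nat.cast_ne_zero.mpr Fintype.card_ne_zero
  simp only [Fin.sum_univ_three, symmetryProj, cons_val]
  match_scalars <;> field_simp <;> ring

theorem trace_symmetryProj [CharZero K] [Nonempty n] (k : Fin 3) :
    (symmetryProj n K k).trace =
      ![((Fintype.card n : K) - 1) * (Fintype.card n + 2) / 2,
        (Fintype.card n : K) * (Fintype.card n - 1) / 2, 1] k := by
  have card_ne_zero : (Fintype.card n : K) ≠ 0 := Nat.cast_ne_zero.mpr Fintype.card_ne_zero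
  fin_cases k <;>
    simp [symmetryProj, trace_sub, trace_add, trace_commutationMatrix, trace_traceMulTraceMatrix,
      card_ne_zero] <;>
    ring

section Inertia

variable {a : ℝ} {A : Matrix (n × n) (n × n) ℝ}

theorem card_filter_eigenvalues_smul_commutationMatrix_sub [Nonempty n] (hA : A.IsHermitian)
    (hAa : A = a • (commutationMatrix n ℝ - traceMulTraceMatrix n ℝ))
    (P : ℝ → Prop) [DecidablePred P] :
    ((Finset.univ.filter fun i => P (hA.eigenvalues i)).card : ℝ) =
      ∑ k with P (a • ![1, -1, 1 - (Fintype.card n : ℝ)] k), (symmetryProj n ℝ k).trace := by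
  refine card_filter_eigenvalues_eq_sum_trace hA completeOrthogonalIdempotents_symmetryProj ?_ P
  simp only [hAa, commutationMatrix_sub_traceMulTraceMatrix_eq_sum, Finset.smul_sum, smul_assoc]

theorem card_pos_eigenvalues_smul_commutationMatrix_sub [Nonempty n] (ha : 0 < a)
    (hA : A.IsHermitian) (hAa : A = a • (commutationMatrix n ℝ - traceMulTraceMatrix n ℝ)) :
    ((Finset.univ.filter fun i => 0 < hA.eigenvalues i).card : ℝ) =
      (Fintype.card n - 1) * (Fintype.card n + 2) / 2 := by
  have not_neg_one_pos : ¬(0 : ℝ) < -1 := by norm_num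
  have not_one_sub_card_pos : ¬(0 : ℝ) < 1 - Fintype.card n := by simp
  rw [card_filter_eigenvalues_smul_commutationMatrix_sub hA hAa]
  simp only [Finset.sum_filter, Fin.sum_univ_three, trace_symmetryProj, cons_val, ha,
    smul_pos_iff_of_pos_left, zero_lt_one, not_neg_one_pos, not_one_sub_card_pos, if_true,
    if_false, add_zero]

theorem card_neg_eigenvalues_smul_commutationMatrix_sub [Nontrivial n] (ha : 0 < a)
    (hA : A.IsHermitian) (hAa : A = a • (commutationMatrix n ℝ - traceMulTraceMatrix n ℝ)) :
    ((Finset.univ.filter fun i => hA.eigenvalues i < 0).card : ℝ) =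
      Fintype.card n * (Fintype.card n - 1) / 2 + 1 := by
  have not_one_neg : ¬(1 : ℝ) < 0 := by norm_num
  have neg_one_neg : (-1 : ℝ) < 0 := by norm_num
  have one_sub_card_neg : (1 - Fintype.card n : ℝ) < 0 := by simp [Fintype.one_lt_card]
  rw [card_filter_eigenvalues_smul_commutationMatrix_sub hA hAa (· < 0)]
  simp only [Finset.sum_filter, Fin.sum_univ_three, trace_symmetryProj, cons_val, ha,
    smul_neg_iff_of_pos_left, not_one_neg, neg_one_neg, one_sub_card_neg, if_true, if_false,
    zero_add]

end Inertia

end MatrixSpace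

section MixedPartials

variable {𝕜 ι F : Type*} [DecidableEq ι]

theorem fderiv_apply_single [Finite ι] [NontriviallyNormedField 𝕜] {E : ι → Type*}
    [∀ i, NormedAddCommGroup (E i)] [∀ i, NormedSpace 𝕜 (E i)] [NormedAddCommGroup F]
    [NormedSpace 𝕜 F] (f : ContinuousMultilinearMap 𝕜 E F)
    (x : ∀ i, E i) (j : ι) (w : E j) :
    fderiv 𝕜 f x (Pi.single j w) = f (update x j w) := by
  have := Fintype.ofFinite ι
  rw [(f.hasFDerivAt x).fderiv, f.linearDeriv_apply, Finset.sum_eq_single_of_mem j (by simp)]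
  · rw [Pi.single_eq_same]
  · intro k _ hk
    exact f.map_coord_zero k (by simp [hk])

variable [Fintype ι]

theorem iteratedFDeriv_two_single_single [NontriviallyNormedField 𝕜] {E : ι → Type*}
    [∀ i, NormedAddCommGroup (E i)] [∀ i, NormedSpace 𝕜 (E i)] [NormedAddCommGroup F]
    [NormedSpace 𝕜 F] (f : ContinuousMultilinearMap 𝕜 E F) {i j : ι} (hij : i ≠ j)
    (x : ∀ i, E i) (u : E i) (w : E j) :
    iteratedFDeriv 𝕜 2 f x ![Pi.single i u, Pi.single j w] =
      f (update (update x i u) j w) := by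
  have differentiableAt_fderiv : DifferentiableAt 𝕜 (fderiv 𝕜 f) x :=
    (f.contDiff.fderiv_right (m := 1) le_rfl).differentiable one_ne_zero x
  have map_update_line (t : 𝕜) : f (update (x + t • Pi.single i u) j w) =
      f (update x j w) + t • f (update (update x i u) j w) := by
    have update_line : update (x + t • Pi.single i u) j w =
        update (update x j w) i (update x j w i + t • u) := by
      ext k
      rcases eq_or_ne k i with rfl | hki
      · simp [hij]
      · rcases eq_or_ne k j with rfl | hkj <;> simp [*]
    rw [update_line, f.map_update_add, f.map_update_smul, update_eq_self, update_comm hij]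
  calc iteratedFDeriv 𝕜 2 f x ![Pi.single i u, Pi.single j w]
      = fderiv 𝕜 (fun y => fderiv 𝕜 f y (Pi.single j w)) x (Pi.single i u) := by
        rw [iteratedFDeriv_two_apply,
          fderiv_clm_apply differentiableAt_fderiv (differentiableAt_const _)]
        simp
    _ = lineDeriv 𝕜 (fun y => fderiv 𝕜 f y (Pi.single j w)) x (Pi.single i u) :=
        (differentiableAt_fderiv.clm_apply
          (differentiableAt_const _)).lineDeriv_eq_fderiv.symm
    _ = f (update (update x i u) j w) := by
        simp_rw [lineDeriv, fderiv_apply_single, map_update_line]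
        simp [deriv_smul_const]

theorem map_update_update_smul [CommSemiring 𝕜] {E : ι → Type*} [∀ i, AddCommMonoid (E i)]
    [∀ i, Module 𝕜 (E i)] [AddCommMonoid F] [Module 𝕜 F] (f : MultilinearMap 𝕜 E F) {i j : ι}
    (hij : i ≠ j) (r : 𝕜) (x : ∀ i, E i) (u : E i) (w : E j) :
    f (update (update (r • x) i u) j w) =
      r ^ (Fintype.card ι - 2) • f (update (update x i u) j w) := by
  have update_smul : update (update (r • x) i u) j w =
      ({i, j}ᶜ : Finset ι).piecewise (fun k => r • update (update x i u) j w k)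
        (update (update x i u) j w) := by
    ext k
    by_cases hj : k = j
    · subst hj
      simp
    by_cases hi : k = i
    · subst hi
      simp [hj]
    · simp [hi, hj]
  rw [update_smul, f.map_piecewise_smul (fun _ => r), Finset.prod_const, Finset.card_compl,
    Finset.card_pair hij]

theorem det_updateRow_updateRow_one [CommRing 𝕜] {i j : ι} (hij : i ≠ j) (u w : ι → 𝕜) :
    (updateRow (updateRow (1 : Matrix ι ι 𝕜) i u) j w).det = u i * w j - u j * w i := by
  let U : Matrix ι (Fin 2) 𝕜 := (of ![Pi.single i 1, Pi.single j 1])ᵀ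
  let V : Matrix (Fin 2) ι 𝕜 := of ![u - Pi.single i 1, w - Pi.single j 1]
  have eq_one_add_mul : updateRow (updateRow (1 : Matrix ι ι 𝕜) i u) j w = 1 + U * V := by
    ext k l
    simp only [updateRow_apply, Matrix.add_apply, Matrix.mul_apply, Fin.sum_univ_two, U, V,
      Pi.single_apply, Matrix.one_apply, transpose_apply, of_apply, cons_val_zero, cons_val_one,
      Pi.sub_apply]
    grind
  have one_add_mul_swap : 1 + V * U = !![u i, u j; w i, w j] := by
    ext k l
    rw [Matrix.add_apply, Matrix.mul_apply]
    fin_cases k <;> fin_cases l <;> simp [U, V, Pi.single_apply, hij, hij.symm]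
  rw [eq_one_add_mul, det_one_add_mul_comm, one_add_mul_swap, det_fin_two_of]

theorem iteratedFDeriv_two_det_smul_one [NontriviallyNormedField 𝕜] {i j : ι} (hij : i ≠ j)
    (r : 𝕜) (u w : ι → 𝕜) :
    iteratedFDeriv 𝕜 2 (fun x : ι → ι → 𝕜 => (of x).det) (of.symm (r • 1))
        ![Pi.single i u, Pi.single j w] =
      r ^ (Fintype.card ι - 2) * (u i * w j - u j * w i) := by
  let f : ContinuousMultilinearMap 𝕜 (fun _ : ι => ι → 𝕜) 𝕜 :=
    ⟨detRowAlternating.toMultilinearMap, continuous_id.matrix_det⟩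
  calc iteratedFDeriv 𝕜 2 f (of.symm (r • 1)) ![Pi.single i u, Pi.single j w]
      = f (update (update (r • of.symm (1 : Matrix ι ι 𝕜)) i u) j w) :=
        iteratedFDeriv_two_single_single f hij _ u w
    _ = r ^ (Fintype.card ι - 2) • f (update (update (of.symm (1 : Matrix ι ι 𝕜)) i u) j w) :=
        map_update_update_smul f.toMultilinearMap hij r _ u w
    _ = r ^ (Fintype.card ι - 2) * (u i * w j - u j * w i) :=
        congrArg _ (det_updateRow_updateRow_one hij u w)

theorem detCostG_smul_one (r : ℝ) :
    detCostG (of.symm (r • 1)) =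
      r • (commutationMatrix (Fin 3) ℝ - traceMulTraceMatrix (Fin 3) ℝ) := by
  have detCost_eq : detCost = -fun x : Fin 3 → Fin 3 → ℝ => (of x).det := by
    ext x
    exact congrArg Neg.neg (det_transpose (of x))
  ext p q
  rw [Matrix.smul_apply, Matrix.sub_apply, commutationMatrix_apply, traceMulTraceMatrix_apply]
  by_cases hpq : p.1 = q.1
  · simp [detCostG, hpq, eq_comm]
  · simp only [detCostG, if_neg hpq]
    rw [detCost_eq, iteratedFDeriv_neg_apply, _root_.neg_apply,
      iteratedFDeriv_two_det_smul_one hpq]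
    simp only [Fintype.card_fin, Pi.single_apply, smul_eq_mul]
    grind

end MixedPartials

/-- at the point `x₁ = (r,0,0)`, `x₂ = (0,r,0)`, `x₃ = (0,0,r)`
with `r > 0`, the matrix `Ḡ` of mixed second partials of `-det` has exactly 5
positive and 4 negative eigenvalues. -/
theorem stmt19 (r : ℝ) (hr : 0 < r)
    (x : Fin 3 → Fin 3 → ℝ) (hx : ∀ i α, x i α = if α = i then r else 0)
    (hG : (detCostG x).IsHermitian) :
    (Finset.univ.filter fun p : Fin 3 × Fin 3 => 0 < hG.eigenvalues p).card = 5 ∧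
    (Finset.univ.filter fun p : Fin 3 × Fin 3 => hG.eigenvalues p < 0).card = 4 := by
  have hGr : detCostG x = r • (commutationMatrix (Fin 3) ℝ - traceMulTraceMatrix (Fin 3) ℝ) := by
    rw [← detCostG_smul_one]
    congr 1
    ext i α
    simp [hx, Matrix.one_apply, eq_comm]
  have card_pos := card_pos_eigenvalues_smul_commutationMatrix_sub hr hG hGr
  have card_neg := card_neg_eigenvalues_smul_commutationMatrix_sub hr hG hGr
  norm_num at card_pos card_neg
  exact ⟨mod_cast card_pos, mod_cast card_neg⟩
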